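/- Let H be a real inner product space with inner product (·,·) and induced norm ‖·‖. Fix an integer k ≥ 1 and real numbers γ, τ > 0 and b₀, c₁ ≥ 0 with γ c₁ τ ≤ 1. Let B, C : H × H → ℝ be bilinear maps with B symmetric and B(x, x) ≥ 0 for all x ∈ H, and with |C(x, y)| ≤ ( b₀ √(B(x, x)) + c₁ ‖x‖ ) ‖y‖ for all x, y ∈ H; set D := B − C. For families of vectors v₁⁻, …, v_k⁻ and v₁⁺, …, v_k⁺ in H, set v̄_i := (v_i⁺ + v_i⁻)/2 and m_i := (v̄_i, v̄_i); say that the step equations hold for D if for every 1 ≤ i ≤ k and every χ ∈ H one has (γτ)⁻¹ (v_i⁺ − v_i⁻, χ) = −m_i D(v̄_i, χ) + (v̄_i, χ) D(v̄_i, v̄_i) + Σ_{l<i} m_i (v_l⁺, χ) D(v̄_i, v_l⁺) + Σ_{l>i} m_i (v_l⁻, χ) D(v̄_i, v_l⁻); and say that the step is nondegenerate for D if (τγ)⁻¹ ≠ (1/2) D(v̄_i, v̄_i) for every 1 ≤ i ≤ k. Suppose (v_i⁻, v_j⁻) = δ_{ij} for all 1 ≤ i, j ≤ k, the step equations hold for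 D, and the step is nondegenerate for D. Then for every 1 ≤ i ≤ k, (1 − γ b₀² τ) B(v_i⁺, v_i⁺) ≤ (1 + γ b₀² τ) B(v_i⁻, v_i⁻) + 2 γ c₁² τ. -/

import Mathlib

/-!
The scheme updates the vectors one after the other, so for each `n` there is a mixed family `W n`
in which the vectors with index `< n` are new and the others are old. Each mixed family is
orthonormal, by induction on `n`: replacing the `i`-th vector, the step equation tested with
`W j`, `j ≠ i`, reduces to `(γτ)⁻¹ (vᵢ⁺, W j) = ½ D(v̄ᵢ, v̄ᵢ) (vᵢ⁺, W j)`, so nondegeneracy gives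
`(vᵢ⁺, W j) = 0`; tested with `v̄ᵢ` it gives `‖vᵢ⁺‖ = ‖vᵢ⁻‖` (`step_orthonormal`).

Testing with `d = vᵢ⁺ - vᵢ⁻`, which is orthogonal to `v̄ᵢ` and to all `W j`, `j ≠ i`, leaves
`(γτ)⁻¹ ‖d‖² = -m D(v̄ᵢ, d)` with `m = ‖v̄ᵢ‖²`, and `B(v̄ᵢ, d) = ½ (B(vᵢ⁺, vᵢ⁺) - B(vᵢ⁻, vᵢ⁻))` by symmetry.
The term `m C(v̄ᵢ, d)` is absorbed by Young's inequality into `(γτ)⁻¹ ‖d‖²`, using `0 < m ≤ 1`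
and `B(v̄ᵢ, v̄ᵢ) ≤ ½ (B(vᵢ⁺, vᵢ⁺) + B(vᵢ⁻, vᵢ⁻))`.
-/


open scoped RealInnerProductSpace BigOperators

/-- The midpoint `v̄ᵢ = (vᵢ⁺ + vᵢ⁻)/2` of two families of vectors. -/
noncomputable def midVec {H : Type*} [NormedAddCommGroup H] [InnerProductSpace ℝ H]
    {k : ℕ} (vm vp : Fin k → H) (i : Fin k) : H :=
  (2 : ℝ)⁻¹ • (vp i + vm i)

/-- One step of the retraction-free orthonormality-preserving scheme: for every `i` and every
test vector `χ`,
`(γτ)⁻¹ (vᵢ⁺ − vᵢ⁻, χ) = −mᵢ D(v̄ᵢ, χ) + (v̄ᵢ, χ) D(v̄ᵢ, v̄ᵢ)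
  + Σ_{l<i} mᵢ (v_l⁺, χ) D(v̄ᵢ, v_l⁺) + Σ_{l>i} mᵢ (v_l⁻, χ) D(v̄ᵢ, v_l⁻)`,
where `mᵢ = (v̄ᵢ, v̄ᵢ)`. -/
def StepEqs {H : Type*} [NormedAddCommGroup H] [InnerProductSpace ℝ H]
    {k : ℕ} (γ τ : ℝ) (vm vp : Fin k → H) (D : H →ₗ[ℝ] H →ₗ[ℝ] ℝ) : Prop :=
  ∀ i : Fin k, ∀ χ : H,
    (γ * τ)⁻¹ * ⟪vp i - vm i, χ⟫ =
      -⟪midVec vm vp i, midVec vm vp i⟫ * D (midVec vm vp i) χ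
      + ⟪midVec vm vp i, χ⟫ * D (midVec vm vp i) (midVec vm vp i)
      + ∑ l ∈ Finset.univ.filter (fun l => l < i),
          ⟪midVec vm vp i, midVec vm vp i⟫ * ⟪vp l, χ⟫ * D (midVec vm vp i) (vp l)
      + ∑ l ∈ Finset.univ.filter (fun l => i < l),
          ⟪midVec vm vp i, midVec vm vp i⟫ * ⟪vm l, χ⟫ * D (midVec vm vp i) (vm l)

/-- Nondegeneracy of one step of the scheme: `(τγ)⁻¹ ≠ (1/2) D(v̄ᵢ, v̄ᵢ)` for every `i`. -/
def StepNondeg {H : Type*} [NormedAddCommGroup H] [InnerProductSpace ℝ H]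
    {k : ℕ} (γ τ : ℝ) (vm vp : Fin k → H) (D : H →ₗ[ℝ] H →ₗ[ℝ] ℝ) : Prop :=
  ∀ i : Fin k, (τ * γ)⁻¹ ≠ (1 / 2) * D (midVec vm vp i) (midVec vm vp i)

/-- The step equation with both sums merged over the family `W` of the vectors that are current
when the `i`-th one is updated. -/
lemma step_eq_erase {H : Type*} [NormedAddCommGroup H] [InnerProductSpace ℝ H]
    {k : ℕ} {γ τ : ℝ} {vm vp : Fin k → H} {D : H →ₗ[ℝ] H →ₗ[ℝ] ℝ}
    (hstep : StepEqs γ τ vm vp D) (i : Fin k) (W : Fin k → H)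
    (hlt : ∀ l, l < i → W l = vp l) (hgt : ∀ l, i < l → W l = vm l) (χ : H) :
    (γ * τ)⁻¹ * ⟪vp i - vm i, χ⟫ =
      -⟪midVec vm vp i, midVec vm vp i⟫ * D (midVec vm vp i) χ
      + ⟪midVec vm vp i, χ⟫ * D (midVec vm vp i) (midVec vm vp i)
      + ∑ l ∈ Finset.univ.erase i,
          ⟪midVec vm vp i, midVec vm vp i⟫ * ⟪W l, χ⟫ * D (midVec vm vp i) (W l) := by
  rw [hstep i χ, add_assoc]
  congr 1
  have hsplit : Finset.univ.erase i =
      Finset.univ.filter (fun l => l < i) ∪ Finset.univ.filter (fun l => i < l) := by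
    ext l
    simp
  rw [hsplit, Finset.sum_union]
  · congr 1
    · refine Finset.sum_congr rfl fun l hl => ?_
      rw [hlt l (by simpa using hl)]
    · refine Finset.sum_congr rfl fun l hl => ?_
      rw [hgt l (by simpa using hl)]
  · rw [Finset.disjoint_left]
    intro l hl hl'
    simp only [Finset.mem_filter, Finset.mem_univ, true_and] at hl hl'
    exact lt_asymm hl' hl

/-- Updating the `i`-th vector of an orthonormal family keeps it orthonormal. -/
lemma step_orthonormal {H : Type*} [NormedAddCommGroup H] [InnerProductSpace ℝ H]
    {k : ℕ} {γ τ : ℝ} (hγ : 0 < γ) (hτ : 0 < τ) {vm vp : Fin k → H} {D : H →ₗ[ℝ] H →ₗ[ℝ] ℝ}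
    (hstep : StepEqs γ τ vm vp D) (hnd : StepNondeg γ τ vm vp D) (i : Fin k) (W : Fin k → H)
    (hlt : ∀ l, l < i → W l = vp l) (hi : W i = vm i) (hgt : ∀ l, i < l → W l = vm l)
    (hW : ∀ a b, ⟪W a, W b⟫ = if a = b then (1 : ℝ) else 0) :
    (∀ j, j ≠ i → ⟪W j, vp i⟫ = 0) ∧ ⟪vp i, vp i⟫ = 1 := by
  have hm : ∀ j, j ≠ i → ⟪W j, vm i⟫ = 0 := fun j hj => by rw [← hi, hW, if_neg hj]
  have key : ∀ j, j ≠ i → ⟪W j, vp i⟫ = 0 := by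
    intro j hj
    have h := step_eq_erase hstep i W hlt hgt (W j)
    rw [Finset.sum_eq_single j] at h
    · have e1 : ⟪vp i - vm i, W j⟫ = ⟪W j, vp i⟫ := by
        rw [real_inner_comm, inner_sub_right, hm j hj, sub_zero]
      have e2 : ⟪midVec vm vp i, W j⟫ = 2⁻¹ * ⟪W j, vp i⟫ := by
        rw [real_inner_comm, midVec, real_inner_smul_right, inner_add_right, hm j hj, add_zero]
      rw [e1, e2, hW, if_pos rfl] at h
      have hz : ((τ * γ)⁻¹ - 1 / 2 * D (midVec vm vp i) (midVec vm vp i)) * ⟪W j, vp i⟫ = 0 := by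
        rw [mul_comm τ γ]
        linear_combination h
      exact (mul_eq_zero.mp hz).resolve_left (sub_ne_zero.mpr (hnd i))
    · intro l _ hl
      rw [hW, if_neg hl]
      ring
    · intro hj'
      exact absurd (Finset.mem_erase.mpr ⟨hj, Finset.mem_univ j⟩) hj'
  refine ⟨key, ?_⟩
  have h := step_eq_erase hstep i W hlt hgt (midVec vm vp i)
  rw [Finset.sum_eq_zero] at h
  · have e1 : ⟪vp i - vm i, midVec vm vp i⟫ = 2⁻¹ * (⟪vp i, vp i⟫ - ⟪vm i, vm i⟫) := by
      rw [midVec, real_inner_smul_right, inner_sub_left, inner_add_right, inner_add_right,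
        real_inner_comm (vp i) (vm i)]
      ring
    have e2 : ⟪vm i, vm i⟫ = 1 := by rw [← hi, hW, if_pos rfl]
    have hz : (γ * τ)⁻¹ * (⟪vp i, vp i⟫ - 1) = 0 := by
      rw [e1, e2] at h
      linear_combination 2 * h
    have hne : (γ * τ)⁻¹ ≠ 0 := by positivity
    linarith [(mul_eq_zero.mp hz).resolve_left hne]
  · intro l hl
    have hl' := Finset.ne_of_mem_erase hl
    have hz : ⟪W l, midVec vm vp i⟫ = 0 := by
      rw [midVec, real_inner_smul_right, inner_add_right, hm l hl', key l hl']
      ring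
    rw [hz]
    ring

/-- The family in which the vectors of index `< n` have been updated is orthonormal. -/
lemma mixed_orthonormal {H : Type*} [NormedAddCommGroup H] [InnerProductSpace ℝ H]
    {k : ℕ} {γ τ : ℝ} (hγ : 0 < γ) (hτ : 0 < τ) {vm vp : Fin k → H} {D : H →ₗ[ℝ] H →ₗ[ℝ] ℝ}
    (horth : ∀ i j : Fin k, ⟪vm i, vm j⟫ = if i = j then (1 : ℝ) else 0)
    (hstep : StepEqs γ τ vm vp D) (hnd : StepNondeg γ τ vm vp D) (n : ℕ) (hn : n ≤ k) :
    ∀ a b : Fin k, ⟪(if a.val < n then vp a else vm a), (if b.val < n then vp b else vm b)⟫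
      = if a = b then (1 : ℝ) else 0 := by
  induction n with
  | zero => simpa using horth
  | succ n ih =>
    have ih := ih (by omega)
    set i : Fin k := ⟨n, by omega⟩ with hi
    obtain ⟨h1, h2⟩ := step_orthonormal hγ hτ hstep hnd i
      (fun a => if a.val < n then vp a else vm a)
      (fun l hl => if_pos hl) (if_neg (lt_irrefl n)) (fun l hl => if_neg (not_lt.mpr (le_of_lt hl)))
      ih
    have hW : ∀ a : Fin k, a ≠ i → (if a.val < n + 1 then vp a else vm a)
        = if a.val < n then vp a else vm a := by
      intro a ha
      have : a.val ≠ n := fun h => ha (Fin.ext h)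
      have : a.val < n + 1 ↔ a.val < n := by omega
      simp only [this]
    have hWi : (if i.val < n + 1 then vp i else vm i) = vp i := if_pos (Nat.lt_succ_self n)
    intro a b
    by_cases ha : a = i
    · by_cases hb : b = i
      · rw [ha, hb, hWi, h2, if_pos rfl]
      · rw [ha, hWi, hW b hb, if_neg (Ne.symm hb), real_inner_comm]
        exact h1 b hb
    · by_cases hb : b = i
      · rw [hb, hWi, hW a ha, if_neg ha]
        exact h1 a ha
      · rw [hW a ha, hW b hb]
        exact ih a b

/-- Young's inequality step: here `s = √(B(v̄, v̄))`, `t = ‖v̄‖`, `δ = ‖d‖`, `g = γτ` and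
`x = C(v̄, d)`; `e` stands for `B(v⁺, v⁺) - B(v⁻, v⁻)`. -/
lemma young_step {g b c s t δ x e : ℝ} (hg : 0 < g) (ht : 0 < t) (ht1 : t ^ 2 ≤ 1)
    (hx : x ≤ (b * s + c * t) * δ) (h : g⁻¹ * δ ^ 2 = -t ^ 2 * (e / 2 - x)) :
    e ≤ g * (b ^ 2 * s ^ 2 + c ^ 2) := by
  have h' : δ ^ 2 = g * t ^ 2 * (x - e / 2) := by
    field_simp at h
    linarith
  have hp : 0 < g * t ^ 2 := by positivity
  have h1 : g * t ^ 2 * e ≤ g * t ^ 2 * (g * t ^ 2 * (b * s + c * t) ^ 2 / 2) := by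
    have := mul_le_mul_of_nonneg_left hx hp.le
    nlinarith [sq_nonneg (2 * δ - g * t ^ 2 * (b * s + c * t))]
  have h2 := le_of_mul_le_mul_left h1 hp
  have h3 : (b * s + c * t) ^ 2 / 2 ≤ b ^ 2 * s ^ 2 + c ^ 2 := by
    nlinarith [sq_nonneg (b * s - c * t), mul_le_mul_of_nonneg_left ht1 (sq_nonneg c)]
  calc e ≤ g * t ^ 2 * (b * s + c * t) ^ 2 / 2 := h2
    _ = g * (t ^ 2 * ((b * s + c * t) ^ 2 / 2)) := by ring
    _ ≤ g * (1 * (b ^ 2 * s ^ 2 + c ^ 2)) := by gcongr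
    _ = g * (b ^ 2 * s ^ 2 + c ^ 2) := by ring

/-- one-step energy estimate for the advection-reaction-diffusion scheme,
abstract form of Theorem 6.3. With `D = B − C`, `B` symmetric positive semidefinite,
`|C(x,y)| ≤ (b₀ √(B(x,x)) + c₁‖x‖)‖y‖`, orthonormal old family, step equations,
nondegeneracy, and `γ c₁ τ ≤ 1`, one has
`(1 − γ b₀² τ) B(vᵢ⁺, vᵢ⁺) ≤ (1 + γ b₀² τ) B(vᵢ⁻, vᵢ⁻) + 2 γ c₁² τ` for every `i`. -/
theorem stmt_13 {H : Type*} [NormedAddCommGroup H] [InnerProductSpace ℝ H]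
    (k : ℕ) (hk : 1 ≤ k) (γ τ b₀ c₁ : ℝ) (hγ : 0 < γ) (hτ : 0 < τ)
    (hb₀ : 0 ≤ b₀) (hc₁ : 0 ≤ c₁) (hsmall : γ * c₁ * τ ≤ 1)
    (B C : H →ₗ[ℝ] H →ₗ[ℝ] ℝ) (hBsymm : ∀ x y : H, B x y = B y x)
    (hBpos : ∀ x : H, 0 ≤ B x x)
    (hC : ∀ x y : H, |C x y| ≤ (b₀ * Real.sqrt (B x x) + c₁ * ‖x‖) * ‖y‖)
    (vm vp : Fin k → H)
    (horth : ∀ i j : Fin k, ⟪vm i, vm j⟫ = if i = j then (1 : ℝ) else 0)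
    (hstep : StepEqs γ τ vm vp (B - C))
    (hnd : StepNondeg γ τ vm vp (B - C)) :
    ∀ i : Fin k,
      (1 - γ * b₀ ^ 2 * τ) * B (vp i) (vp i) ≤
        (1 + γ * b₀ ^ 2 * τ) * B (vm i) (vm i) + 2 * γ * c₁ ^ 2 * τ := by
  intro i
  have hW := mixed_orthonormal hγ hτ horth hstep hnd i.val i.isLt.le
  set W : Fin k → H := fun a => if a.val < i.val then vp a else vm a with hWdef
  have hlt : ∀ l, l < i → W l = vp l := fun l hl => if_pos hl
  have hgt : ∀ l, i < l → W l = vm l := fun l hl => if_neg (not_lt.mpr (le_of_lt hl))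
  have hi : W i = vm i := if_neg (lt_irrefl _)
  obtain ⟨horthp, hpp⟩ := step_orthonormal hγ hτ hstep hnd i W hlt hi hgt hW
  have hmm : ⟪vm i, vm i⟫ = 1 := by rw [horth, if_pos rfl]
  have h := step_eq_erase hstep i W hlt hgt (vp i - vm i)
  rw [Finset.sum_eq_zero] at h
  swap
  · intro l hl
    have hl' := Finset.ne_of_mem_erase hl
    have : ⟪W l, vm i⟫ = 0 := by rw [← hi]; exact (hW l i).trans (if_neg hl')
    rw [inner_sub_right, horthp l hl', this]
    ring
  have hmid : midVec vm vp i = (2 : ℝ)⁻¹ • (vp i + vm i) := rfl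
  have hvd : ⟪midVec vm vp i, vp i - vm i⟫ = 0 := by
    rw [hmid, real_inner_smul_left, inner_sub_right, inner_add_left, inner_add_left, hpp, hmm,
      real_inner_comm (vp i) (vm i)]
    ring
  -- Parallelogram identity for the unit vectors `vᵢ⁺` and `vᵢ⁻`; it gives `‖v̄ᵢ‖ ≤ 1`.
  have hpar : ‖midVec vm vp i‖ ^ 2 + ‖vp i - vm i‖ ^ 2 / 4 = 1 := by
    rw [← real_inner_self_eq_norm_sq, ← real_inner_self_eq_norm_sq, hmid, real_inner_smul_left,
      real_inner_smul_right, inner_sub_right, inner_add_left, inner_add_right, inner_add_right,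
      inner_sub_left, inner_sub_left, hpp, hmm, real_inner_comm (vp i) (vm i)]
    ring
  have hBd : B (midVec vm vp i) (vp i - vm i) = (B (vp i) (vp i) - B (vm i) (vm i)) / 2 := by
    rw [hmid]
    simp only [map_add, map_sub, map_smul, LinearMap.add_apply, LinearMap.smul_apply, smul_eq_mul]
    rw [hBsymm (vm i) (vp i)]
    ring
  have hBmid : B (midVec vm vp i) (midVec vm vp i) ≤ (B (vp i) (vp i) + B (vm i) (vm i)) / 2 := by
    have hpos := hBpos (vp i - vm i)
    rw [hmid]
    simp only [map_add, map_sub, map_smul, LinearMap.add_apply, LinearMap.sub_apply,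
      LinearMap.smul_apply, smul_eq_mul] at hpos ⊢
    rw [hBsymm (vm i) (vp i)] at hpos ⊢
    linarith
  rw [hvd, real_inner_self_eq_norm_sq, real_inner_self_eq_norm_sq, LinearMap.sub_apply,
    LinearMap.sub_apply, hBd, zero_mul, add_zero, add_zero] at h
  have hg : 0 < γ * τ := mul_pos hγ hτ
  -- If `v̄ᵢ` vanished, the step equation would give `vᵢ⁺ = vᵢ⁻`, against the parallelogram identity.
  have ht : 0 < ‖midVec vm vp i‖ := by
    rcases (norm_nonneg (midVec vm vp i)).lt_or_eq with h0 | h0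
    · exact h0
    · exfalso
      rw [← h0] at h hpar
      have hz : (γ * τ)⁻¹ * ‖vp i - vm i‖ ^ 2 = 0 := by rw [h]; ring
      rw [(mul_eq_zero.mp hz).resolve_left (by positivity)] at hpar
      norm_num at hpar
  have hy := young_step hg ht (by nlinarith [sq_nonneg ‖vp i - vm i‖])
    ((le_abs_self _).trans (hC (midVec vm vp i) (vp i - vm i))) h
  rw [Real.sq_sqrt (hBpos _)] at hy
  have hgb : 0 ≤ γ * τ * b₀ ^ 2 := by positivity
  have hgc : 0 ≤ γ * τ * c₁ ^ 2 := by positivity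
  have h1 := mul_le_mul_of_nonneg_left hBmid hgb
  have h2 := mul_nonneg hgb (hBpos (vp i))
  have h3 := mul_nonneg hgb (hBpos (vm i))
  linarith
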